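/- arXiv:2403.00120 — 2 statements merged into one kernel-verified Lean document; each statement's English description precedes it below -/
import Mathlib

section
/- Let q be a prime power and F = F_q(X). Let W ⊂ F^3 be a one-dimensional subspace of height l ≥ 0, and let k ≥ 1. Then the number of two-dimensional subspaces V ⊂ F^3 containing W with h(V) = h(W) + k equals q^{2k+l-1}(q^2-1). -/
open Polynomial

/-!
A hyperplane containing `A` is the orthogonal complement of a primitive syzygy `B` of `A`, unique up
to a constant, so one counts primitive syzygies of height `l + k`. The map `B ↦ A ⬝ᵥ B` from vectors
of height `< m` to polynomials of degree `< l + m` is surjective as soon as `m ≥ l` (Bezout, then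
reduction modulo an entry of `A` of maximal degree), so the number `E m` of all syzygies of height
`m` is the difference of two powers of `q`, up to the factor `q ^ l`. Every nonzero syzygy is
uniquely a monic polynomial times a primitive syzygy, and a monic polynomial is either `1` or
`g * X + c` with `g` monic and `c` constant. Hence `E (m + 1) = P (m + 1) + q * E m`, where `P`
counts the primitive syzygies.
-/

/-- A vector whose entries have no common divisor other than units: the normal form, up to
units, of a vector spanning a given line. -/
def IsPrimitiveVector {ι R : Type*} [Monoid R] (B : ι → R) : Prop :=
  ∀ d, (∀ i, d ∣ B i) → IsUnit d

/-- The height of the line spanned by `B`, provided `B` is a primitive vector; the zero vector has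
height `⊥`. -/
def vectorHeight {ι R : Type*} [Fintype ι] [Semiring R] (B : ι → R[X]) : WithBot ℕ :=
  Finset.univ.sup fun i => (B i).degree

lemma ncard_image_mul_card_of_free {G α β : Type*} [Group G] [MulAction G α] {s : Set α} {f : α → β}
    (hs : ∀ (g : G), ∀ x ∈ s, g • x ∈ s) (hfree : ∀ (g : G), ∀ x ∈ s, g • x = x → g = 1)
    (hf : ∀ x ∈ s, ∀ y ∈ s, f x = f y ↔ ∃ g : G, g • y = x) :
    (f '' s).ncard * Nat.card G = s.ncard := by
  have hy (y : f '' s) := y.2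
  choose r hrs hr using hy
  rw [← Nat.card_coe_set_eq, ← Nat.card_coe_set_eq, ← Nat.card_prod]
  refine Nat.card_congr (Equiv.ofBijective (fun p => ⟨p.2 • r p.1, hs _ _ (hrs p.1)⟩) ⟨?_, ?_⟩)
  · rintro ⟨y, g⟩ ⟨z, h⟩ hgh
    have hgh : g • r y = h • r z := congrArg Subtype.val hgh
    obtain rfl : y = z := Subtype.ext <| by
      rw [← hr y, ← hr z, hf _ (hrs y) _ (hrs z)]
      exact ⟨g⁻¹ * h, by rw [mul_smul, ← hgh, inv_smul_smul]⟩
    have hgh' : h⁻¹ * g = 1 := hfree _ _ (hrs y) (by rw [mul_smul, hgh, inv_smul_smul])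
    rw [inv_mul_eq_one.1 hgh']
  · rintro ⟨x, hx⟩
    let y : f '' s := ⟨f x, x, hx, rfl⟩
    obtain ⟨g, hg⟩ := (hf x hx _ (hrs y)).1 (hr y).symm
    exact ⟨(y, g), Subtype.ext hg⟩

lemma card_units_polynomial (R : Type*) [CommRing R] [IsDomain R] :
    Nat.card R[X]ˣ = Nat.card Rˣ := by
  refine (Nat.card_congr (Equiv.ofBijective (Units.map (C : R →+* R[X]).toMonoidHom)
    ⟨Units.map_injective C_injective, fun u => ?_⟩)).symm
  obtain ⟨c, hc, hcu⟩ := Polynomial.isUnit_iff.1 u.isUnit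
  exact ⟨hc.unit, Units.ext hcu⟩

section MulXAddC

variable {R : Type*} [Semiring R]

lemma degree_C_lt_degree_mul_X {g : R[X]} (hg : g ≠ 0) (c : R) :
    (C c).degree < (g * X).degree := by
  have := Polynomial.nontrivial_iff.1 ⟨g, 0, hg⟩
  rw [degree_mul_X, degree_eq_natDegree hg]
  exact degree_C_le.trans_lt (by exact_mod_cast g.natDegree.succ_pos)

lemma degree_mul_X_add_C {g : R[X]} (hg : g ≠ 0) (c : R) :
    (g * X + C c).degree = g.degree + 1 := by
  have := Polynomial.nontrivial_iff.1 ⟨g, 0, hg⟩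
  rw [degree_add_eq_left_of_degree_lt (degree_C_lt_degree_mul_X hg c), degree_mul_X]

lemma monic_mul_X_add_C {g : R[X]} (hg : g.Monic) (c : R) : (g * X + C c).Monic := by
  nontriviality R
  exact (hg.mul monic_X).add_of_left (degree_C_lt_degree_mul_X hg.ne_zero c)

lemma monic_divX {g : R[X]} (hg : g.Monic) (hg1 : g ≠ 1) : (divX g).Monic := by
  rw [Monic, leadingCoeff, natDegree_divX_eq_natDegree_tsub_one, coeff_divX,
    Nat.sub_add_cancel (Nat.pos_of_ne_zero (hg.natDegree_eq_zero.not.2 hg1))]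
  exact hg

lemma mul_X_add_C_inj {g h : R[X]} {b c : R} : g * X + C b = h * X + C c ↔ g = h ∧ b = c := by
  refine ⟨fun H => ⟨ext fun n => ?_, ?_⟩, fun H => by rw [H.1, H.2]⟩
  · simpa [coeff_C_succ] using congrArg (coeff · (n + 1)) H
  · simpa using congrArg (coeff · 0) H

end MulXAddC

namespace IsPrimitiveVector

section Basic

variable {ι R : Type*}

lemma ne_zero [MonoidWithZero R] [Nontrivial R] {B : ι → R} (hB : IsPrimitiveVector B) :
    B ≠ 0 := by
  rintro rfl
  exact not_isUnit_zero (hB 0 fun _ => dvd_zero _)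

lemma units_smul [CommMonoid R] {B : ι → R} (hB : IsPrimitiveVector B) (u : Rˣ) :
    IsPrimitiveVector (u • B) :=
  fun d hd => hB d fun i => Units.dvd_mul_left.1 (hd i)

end Basic

section PrincipalIdealRing

variable {ι R : Type*} [CommRing R] [IsPrincipalIdealRing R]

lemma exists_dotProduct_eq_one [Fintype ι] {B : ι → R} (hB : IsPrimitiveVector B) :
    ∃ u : ι → R, u ⬝ᵥ B = 1 := by
  obtain ⟨d, hd⟩ := (IsPrincipalIdealRing.principal (Ideal.span (Set.range B))).principal
  have hdvd (i) : d ∣ B i :=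
    Ideal.mem_span_singleton.1 (hd.le (Ideal.subset_span ⟨i, rfl⟩))
  have h_top : Ideal.span (Set.range B) = ⊤ :=
    hd.trans (Ideal.span_singleton_eq_top.2 (hB d hdvd))
  exact Ideal.mem_span_range_iff_exists_fun.1 ((Ideal.eq_top_iff_one _).1 h_top)

lemma dvd_of_smul_eq_smul [Finite ι] {C D : ι → R} (hC : IsPrimitiveVector C) {g h : R}
    (hgh : g • C = h • D) : h ∣ g := by
  have := Fintype.ofFinite ι
  obtain ⟨u, hu⟩ := hC.exists_dotProduct_eq_one
  refine ⟨u ⬝ᵥ D, ?_⟩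
  calc g = u ⬝ᵥ (g • C) := by rw [dotProduct_smul, hu, smul_eq_mul, mul_one]
    _ = h * (u ⬝ᵥ D) := by rw [hgh, dotProduct_smul, smul_eq_mul]

end PrincipalIdealRing

section Polynomial

variable {ι F : Type*} [Finite ι] [Field F]

lemma eq_and_eq_of_monic_smul_eq {C D : ι → F[X]} (hC : IsPrimitiveVector C)
    (hD : IsPrimitiveVector D) {g h : F[X]} (hg : g.Monic) (hh : h.Monic)
    (hgh : g • C = h • D) : g = h ∧ C = D := by
  obtain rfl : g = h := eq_of_monic_of_associated hg hh <|
    associated_of_dvd_dvd (hD.dvd_of_smul_eq_smul hgh.symm) (hC.dvd_of_smul_eq_smul hgh)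
  exact ⟨rfl, smul_right_injective _ hg.ne_zero hgh⟩

end Polynomial

end IsPrimitiveVector

lemma exists_monic_smul_isPrimitiveVector {ι F : Type*} [Finite ι] [Field F] {B : ι → F[X]}
    (hB : B ≠ 0) : ∃ (g : F[X]) (C : ι → F[X]), g.Monic ∧ IsPrimitiveVector C ∧ g • C = B := by
  classical
  have := Fintype.ofFinite ι
  let := UniqueFactorizationMonoid.toNormalizedGCDMonoid F[X]
  obtain ⟨j, hj⟩ := Function.ne_iff.1 hB
  obtain ⟨C, hBC, hC⟩ := Finset.univ.extract_gcd B ⟨j, Finset.mem_univ j⟩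
  have hg : Finset.univ.gcd B ≠ 0 := fun h =>
    hj (Finset.gcd_eq_zero_iff.1 h j (Finset.mem_univ j))
  refine ⟨Finset.univ.gcd B, C, (normalize_eq_self_iff_monic hg).1 Finset.normalize_gcd,
    fun d hd => isUnit_of_dvd_one (hC ▸ Finset.dvd_gcd fun i _ => hd i),
    funext fun i => (hBC i (Finset.mem_univ i)).symm⟩

section Height

variable {ι R : Type*} [Fintype ι]

section Semiring
variable [Semiring R]

lemma degree_le_vectorHeight (B : ι → R[X]) (i : ι) : (B i).degree ≤ vectorHeight B :=
  Finset.le_sup (f := fun i => (B i).degree) (Finset.mem_univ i)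

lemma vectorHeight_lt_iff {B : ι → R[X]} {m : ℕ} :
    vectorHeight B < m ↔ ∀ i, (B i).degree < m := by
  simp [vectorHeight]

lemma vectorHeight_eq_bot_iff {B : ι → R[X]} : vectorHeight B = ⊥ ↔ B = 0 := by
  simp [vectorHeight, Finset.sup_eq_bot_iff, funext_iff]

lemma vectorHeight_smul [NoZeroDivisors R] (g : R[X]) (B : ι → R[X]) :
    vectorHeight (g • B) = g.degree + vectorHeight B := by
  simp only [vectorHeight, Pi.smul_apply, smul_eq_mul, degree_mul]
  refine (Finset.apply_sup_eq_sup_comp (g.degree + ·) (fun a b => ?_) ?_).symm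
  · exact (add_right_mono (a := g.degree)).map_sup a b
  · exact WithBot.add_bot _

lemma degree_dotProduct_lt {A B : ι → R[X]} {l m : ℕ} (hA : vectorHeight A ≤ l)
    (hB : vectorHeight B < m) : (A ⬝ᵥ B).degree < (l + m : ℕ) := by
  refine mem_degreeLT.1 (Submodule.sum_mem _ fun i _ => mem_degreeLT.2 ?_)
  have hAi := (degree_le_vectorHeight A i).trans hA
  have hBi := (degree_le_vectorHeight B i).trans_lt hB
  calc (A i * B i).degree ≤ (A i).degree + (B i).degree := degree_mul_le _ _
    _ ≤ l + (B i).degree := by gcongr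
    _ < l + m := WithBot.add_lt_add_left (WithBot.coe_ne_bot) hBi
    _ = (l + m : ℕ) := by push_cast; rfl

end Semiring

end Height

lemma exists_dotProduct_eq {ι F : Type*} [Fintype ι] [Field F] {A : ι → F[X]}
    (hA : IsPrimitiveVector A) {l m : ℕ} (hl : vectorHeight A = l) (hm : l ≤ m) {p : F[X]}
    (hp : p.degree < (l + m : ℕ)) : ∃ B : ι → F[X], vectorHeight B < m ∧ A ⬝ᵥ B = p := by
  classical
  obtain ⟨i₀, -⟩ := Function.ne_iff.1 hA.ne_zero
  obtain ⟨j, -, hj⟩ := Finset.univ.exists_mem_eq_sup ⟨i₀, Finset.mem_univ i₀⟩ fun i => (A i).degree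
  have hj : (A j).degree = l := hj.symm.trans hl
  have hj0 : A j ≠ 0 := by rintro h; simp [h] at hj
  obtain ⟨u, hu⟩ := hA.exists_dotProduct_eq_one
  set c : ι → F[X] := fun i => p * u i % A j
  have hc : vectorHeight c < l :=
    vectorHeight_lt_iff.2 fun i => hj ▸ EuclideanDomain.mod_lt _ hj0
  have hcm : vectorHeight c < m := hc.trans_le (by exact_mod_cast hm)
  have hdvd : A j ∣ p - A ⬝ᵥ c := by
    have hpu : p = A ⬝ᵥ (p • u) := by
      rw [dotProduct_smul, dotProduct_comm, hu, smul_eq_mul, mul_one]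
    rw [hpu, ← dotProduct_sub]
    refine Finset.dvd_sum fun i _ => Dvd.dvd.mul_left ?_ _
    exact ⟨p * u i / A j, sub_eq_of_eq_add (EuclideanDomain.div_add_mod _ _).symm⟩
  obtain ⟨e, he⟩ := hdvd
  have he_deg : e.degree < m := by
    have : (A j * e).degree < l + m := by
      rw [← he]
      exact (degree_sub_le _ _).trans_lt (max_lt hp (degree_dotProduct_lt hl.le hcm))
    rw [degree_mul, hj] at this
    exact lt_of_add_lt_add_left this
  refine ⟨c + Pi.single j e, vectorHeight_lt_iff.2 fun i => ?_, ?_⟩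
  · rw [Pi.add_apply, Pi.single_apply]
    refine (degree_add_le _ _).trans_lt (max_lt (vectorHeight_lt_iff.1 hcm i) ?_)
    split_ifs
    · exact he_deg
    · simp
  · rw [dotProduct_add, dotProduct_single, ← he, add_sub_cancel]

section HeightLT

variable (ι R : Type*) [Semiring R]

/-- The vectors of polynomials all of whose entries have degree `< m`. -/
noncomputable def heightLT (m : ℕ) : Submodule R (ι → R[X]) :=
  Submodule.pi Set.univ fun _ => degreeLT R m

variable {ι R} in
lemma mem_heightLT [Fintype ι] {m : ℕ} {B : ι → R[X]} :
    B ∈ heightLT ι R m ↔ vectorHeight B < m := by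
  simp [heightLT, mem_degreeLT, vectorHeight_lt_iff]

lemma card_degreeLT (m : ℕ) : Nat.card (degreeLT R m) = Nat.card R ^ m := by
  rw [Nat.card_congr (degreeLTEquiv R m).toEquiv, Nat.card_fun, Nat.card_fin]

lemma card_heightLT [Fintype ι] (m : ℕ) :
    Nat.card (heightLT ι R m) = Nat.card R ^ (Fintype.card ι * m) := by
  calc Nat.card (heightLT ι R m) = Nat.card (ι → degreeLT R m) :=
        Nat.card_congr (Equiv.Set.univPi fun _ => (degreeLT R m : Set R[X]))
    _ = Nat.card R ^ (Fintype.card ι * m) := by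
        rw [Nat.card_fun, card_degreeLT, Nat.card_eq_fintype_card (α := ι), ← pow_mul, mul_comm]

lemma finite_heightLT [Finite ι] [Finite R] (m : ℕ) : Finite (heightLT ι R m) := by
  have := Fintype.ofFinite ι
  exact Nat.finite_of_card_ne_zero (by rw [card_heightLT]; exact pow_ne_zero _ Nat.card_pos.ne')

end HeightLT

section Syzygy

variable {ι : Type*} [Fintype ι]

section Semiring

variable {R : Type*} [Semiring R]

/-- The syzygies of `A` of height `< m`. -/
def syzygiesOfHeightLT (A : ι → R[X]) (m : ℕ) : Set (ι → R[X]) :=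
  {B | vectorHeight B < m ∧ A ⬝ᵥ B = 0}

/-- The syzygies of `A` of height `n`. -/
def syzygiesOfHeight (A : ι → R[X]) (n : ℕ) : Set (ι → R[X]) :=
  {B | vectorHeight B = n ∧ A ⬝ᵥ B = 0}

/-- The primitive syzygies of `A` of height `n`; up to units these are the hyperplanes of height `n`
containing `A`. -/
def primitiveSyzygiesOfHeight (A : ι → R[X]) (n : ℕ) : Set (ι → R[X]) :=
  {B | IsPrimitiveVector B ∧ B ∈ syzygiesOfHeight A n}

/-- The pairs `(g, C)` with `g` monic, `C` a primitive syzygy of `A` and `g • C` of height `n`; they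
are the factorisations of the syzygies of height `n`. -/
def monicPrimitivePairs (A : ι → R[X]) (n : ℕ) : Set (R[X] × (ι → R[X])) :=
  {x | x.1.Monic ∧ IsPrimitiveVector x.2 ∧ x.1 • x.2 ∈ syzygiesOfHeight A n}

lemma syzygiesOfHeightLT_succ (A : ι → R[X]) (n : ℕ) :
    syzygiesOfHeightLT A (n + 1) = syzygiesOfHeightLT A n ∪ syzygiesOfHeight A n := by
  ext B
  have : vectorHeight B < (n + 1 : ℕ) ↔ vectorHeight B < n ∨ vectorHeight B = n := by
    rw [← le_iff_lt_or_eq]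
    cases vectorHeight B with
    | bot => simp
    | coe t => exact WithBot.coe_lt_coe.trans (Nat.lt_succ_iff.trans WithBot.coe_le_coe.symm)
  simp only [syzygiesOfHeightLT, syzygiesOfHeight, Set.mem_union, Set.mem_ofPred_eq, this,
    or_and_right]

lemma finite_syzygiesOfHeightLT [Finite R] (A : ι → R[X]) (m : ℕ) :
    (syzygiesOfHeightLT A m).Finite :=
  (Set.finite_coe_iff.1 (finite_heightLT ι R m)).subset fun _ hB => mem_heightLT.2 hB.1

lemma finite_syzygiesOfHeight [Finite R] (A : ι → R[X]) (n : ℕ) :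
    (syzygiesOfHeight A n).Finite :=
  (finite_syzygiesOfHeightLT A (n + 1)).subset
    (syzygiesOfHeightLT_succ A n ▸ Set.subset_union_right)

lemma one_mem_monicPrimitivePairs_iff {A D : ι → R[X]} {n : ℕ} :
    (1, D) ∈ monicPrimitivePairs A n ↔ D ∈ primitiveSyzygiesOfHeight A n := by
  simp [monicPrimitivePairs, primitiveSyzygiesOfHeight, monic_one]

end Semiring

section NoZeroDivisors

variable {R : Type*} [CommSemiring R] [NoZeroDivisors R]

lemma smul_mem_syzygiesOfHeight_iff {A B : ι → R[X]} {g : R[X]} {n : ℕ} (hg : g ≠ 0) :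
    g • B ∈ syzygiesOfHeight A n ↔ g.degree + vectorHeight B = n ∧ A ⬝ᵥ B = 0 := by
  simp [syzygiesOfHeight, vectorHeight_smul, dotProduct_smul, hg]

variable [Nontrivial R]

lemma mul_X_add_C_mem_monicPrimitivePairs_iff {A D : ι → R[X]} {g : R[X]} (hg : g.Monic) {c : R}
    {n : ℕ} :
    (g * X + C c, D) ∈ monicPrimitivePairs A (n + 1) ↔ (g, D) ∈ monicPrimitivePairs A n := by
  have hgc := monic_mul_X_add_C hg c
  simp only [monicPrimitivePairs, Set.mem_ofPred_eq, hg, hgc, true_and,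
    smul_mem_syzygiesOfHeight_iff hg.ne_zero, smul_mem_syzygiesOfHeight_iff hgc.ne_zero,
    degree_mul_X_add_C hg.ne_zero, add_right_comm _ (1 : WithBot ℕ), Nat.cast_add, Nat.cast_one]
  rw [WithBot.add_right_inj WithBot.one_ne_bot]

lemma monicPrimitivePairs_succ (A : ι → R[X]) (n : ℕ) :
    monicPrimitivePairs A (n + 1) = Prod.mk 1 '' primitiveSyzygiesOfHeight A (n + 1) ∪
      (fun x : R × R[X] × (ι → R[X]) => (x.2.1 * X + C x.1, x.2.2)) ''
        (Set.univ ×ˢ monicPrimitivePairs A n) := by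
  ext ⟨g, D⟩
  constructor
  · intro h
    rcases eq_or_ne g 1 with rfl | hg1
    · exact Or.inl ⟨D, one_mem_monicPrimitivePairs_iff.1 h, rfl⟩
    · refine Or.inr ⟨(g.coeff 0, divX g, D), ⟨trivial, ?_⟩, by simp only [divX_mul_X_add]⟩
      rwa [← mul_X_add_C_mem_monicPrimitivePairs_iff (monic_divX h.1 hg1), divX_mul_X_add]
  · rintro (⟨D, hD, ⟨⟩⟩ | ⟨⟨c, g, D⟩, ⟨-, h⟩, ⟨⟩⟩)
    · exact one_mem_monicPrimitivePairs_iff.2 hD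
    · exact (mul_X_add_C_mem_monicPrimitivePairs_iff h.1).2 h

end NoZeroDivisors

section Field

variable {F : Type*} [Field F]

lemma bijOn_monicPrimitivePairs (A : ι → F[X]) (n : ℕ) :
    Set.BijOn (fun x => x.1 • x.2) (monicPrimitivePairs A n) (syzygiesOfHeight A n) := by
  refine ⟨fun x hx => hx.2.2, fun x hx y hy hxy => ?_, fun B hB => ?_⟩
  · exact Prod.ext_iff.2 (hx.2.1.eq_and_eq_of_monic_smul_eq hy.2.1 hx.1 hy.1 hxy)
  · have hB0 : B ≠ 0 := fun h => by simpa [vectorHeight_eq_bot_iff.2 h] using hB.1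
    obtain ⟨g, C, hg, hC, rfl⟩ := exists_monic_smul_isPrimitiveVector hB0
    exact ⟨(g, C), ⟨hg, hC, hB⟩, rfl⟩

lemma ncard_monicPrimitivePairs (A : ι → F[X]) (n : ℕ) :
    (monicPrimitivePairs A n).ncard = (syzygiesOfHeight A n).ncard := by
  rw [← (bijOn_monicPrimitivePairs A n).image_eq,
    (bijOn_monicPrimitivePairs A n).injOn.ncard_image]

lemma ncard_primitiveSyzygiesOfHeight_add [Finite F] (A : ι → F[X]) (n : ℕ) :
    (primitiveSyzygiesOfHeight A (n + 1)).ncard + Nat.card F * (syzygiesOfHeight A n).ncard =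
      (syzygiesOfHeight A (n + 1)).ncard := by
  have hfin (m : ℕ) : (monicPrimitivePairs A m).Finite :=
    (bijOn_monicPrimitivePairs A m).finite_iff_finite.2 (finite_syzygiesOfHeight A m)
  have hunion := hfin (n + 1)
  rw [monicPrimitivePairs_succ, Set.finite_union] at hunion
  rw [← ncard_monicPrimitivePairs A (n + 1), monicPrimitivePairs_succ,
    Set.ncard_union_eq ?_ hunion.1 hunion.2,
    Set.ncard_image_of_injective _ (Prod.mk_right_injective 1), Set.ncard_image_of_injective,
    Set.ncard_prod, Set.ncard_univ, ncard_monicPrimitivePairs]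
  · rintro ⟨b, g, D⟩ ⟨c, h, E⟩ hgh
    simp only [Prod.mk.injEq, mul_X_add_C_inj] at hgh ⊢
    tauto
  · rw [Set.disjoint_left]
    rintro _ ⟨D, -, rfl⟩ ⟨⟨c, g, E⟩, ⟨-, hg⟩, h⟩
    have hdeg := degree_mul_X_add_C hg.1.ne_zero c
    rw [(Prod.mk.inj h).1, degree_one, degree_eq_natDegree hg.1.ne_zero] at hdeg
    norm_cast at hdeg

lemma ncard_syzygiesOfHeightLT_mul [Finite F] {A : ι → F[X]} (hA : IsPrimitiveVector A) {l m : ℕ}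
    (hl : vectorHeight A = l) (hm : l ≤ m) :
    (syzygiesOfHeightLT A m).ncard * Nat.card F ^ (l + m) =
      Nat.card F ^ (Fintype.card ι * m) := by
  let φ : heightLT ι F m →ₗ[F] degreeLT F (l + m) :=
    (dotProductBilin F F A).restrict fun B hB =>
      mem_degreeLT.2 (degree_dotProduct_lt hl.le (mem_heightLT.1 hB))
  have hφ : Function.Surjective φ := by
    rintro ⟨p, hp⟩
    obtain ⟨B, hB, rfl⟩ := exists_dotProduct_eq hA hl hm (mem_degreeLT.1 hp)
    exact ⟨⟨B, mem_heightLT.2 hB⟩, rfl⟩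
  have hker : syzygiesOfHeightLT A m =
      Subtype.val '' (LinearMap.ker φ : Set (heightLT ι F m)) := by
    ext B
    simp [φ, syzygiesOfHeightLT, ← mem_heightLT, LinearMap.ker_restrict, and_comm]
  rw [hker, Set.ncard_image_of_injective _ Subtype.val_injective, ← card_degreeLT,
    ← Nat.card_congr (φ.quotKerEquivOfSurjective hφ).toEquiv, ← card_heightLT]
  exact ((LinearMap.ker φ).card_eq_card_quotient_mul_card).symm

lemma ncard_syzygiesOfHeight_mul_add [Finite F] {A : ι → F[X]} (hA : IsPrimitiveVector A)
    {n l m : ℕ} (hn : Fintype.card ι = n + 1) (hl : vectorHeight A = l) (hm : l ≤ m) :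
    (syzygiesOfHeight A m).ncard * Nat.card F ^ l + Nat.card F ^ (n * m) =
      Nat.card F ^ (n * (m + 1)) := by
  have hN {m : ℕ} (hm : l ≤ m) : (syzygiesOfHeightLT A m).ncard * Nat.card F ^ l =
      Nat.card F ^ (n * m) := by
    refine Nat.eq_of_mul_eq_mul_right (pow_pos (Nat.card_pos (α := F)) m) ?_
    rw [mul_assoc, ← pow_add, ncard_syzygiesOfHeightLT_mul hA hl hm, hn, ← pow_add, Nat.succ_mul]
  have hdisj : Disjoint (syzygiesOfHeightLT A m) (syzygiesOfHeight A m) :=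
    Set.disjoint_left.2 fun B hlt heq => hlt.1.ne heq.1
  rw [← hN hm, ← hN (hm.trans m.le_succ), syzygiesOfHeightLT_succ, Set.ncard_union_eq hdisj
    (finite_syzygiesOfHeightLT A m) (finite_syzygiesOfHeight A m)]
  ring

lemma ncard_primitiveSyzygiesOfHeight_mul [Finite F] {A : ι → F[X]} (hA : IsPrimitiveVector A)
    {n l m : ℕ} (hn : Fintype.card ι = n + 1) (hl : vectorHeight A = l) (hm : l ≤ m) :
    ((primitiveSyzygiesOfHeight A (m + 1)).ncard * Nat.card F ^ l : ℤ) =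
      (Nat.card F : ℤ) ^ (n * m) * (Nat.card F ^ n - 1) * (Nat.card F ^ n - Nat.card F) := by
  have hE := ncard_syzygiesOfHeight_mul_add hA hn hl hm
  have hE' := ncard_syzygiesOfHeight_mul_add (m := m + 1) hA hn hl (by lia)
  have hP := ncard_primitiveSyzygiesOfHeight_add A m
  zify at hE hE' hP
  rw [← hP] at hE'
  linear_combination hE' - Nat.card F * hE

end Field

end Syzygy

section Hyperplane

/-- The hyperplane orthogonal to `B`, in the vector space over the fraction field `K` of `R`. -/
noncomputable def orthogonalHyperplane {ι R : Type*} (K : Type*) [Fintype ι] [CommRing R] [Field K]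
    [Algebra R K] (B : ι → R) : Submodule K (ι → K) :=
  LinearMap.ker (dotProductBilin K K fun i => algebraMap R K (B i))

variable {ι R K : Type*} [Fintype ι] [CommRing R] [Field K] [Algebra R K]

lemma mem_orthogonalHyperplane {B : ι → R} {v : ι → K} :
    v ∈ orthogonalHyperplane K B ↔ ∑ i, algebraMap R K (B i) * v i = 0 :=
  Iff.rfl

lemma orthogonalHyperplane_units_smul (u : Rˣ) (B : ι → R) :
    orthogonalHyperplane K (u • B) = orthogonalHyperplane K B := by
  ext v
  have hu : algebraMap R K u ≠ 0 := (u.isUnit.map (algebraMap R K)).ne_zero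
  simp [mem_orthogonalHyperplane, Units.smul_def, mul_assoc, ← Finset.mul_sum, hu]

variable [IsFractionRing R K]

lemma span_le_orthogonalHyperplane_iff {A B : ι → R} :
    Submodule.span K {fun i => algebraMap R K (A i)} ≤ orthogonalHyperplane K B ↔ A ⬝ᵥ B = 0 := by
  rw [Submodule.span_singleton_le_iff_mem, mem_orthogonalHyperplane, dotProduct_comm,
    ← (IsFractionRing.injective R K).eq_iff, map_zero]
  simp [dotProduct]

lemma finrank_orthogonalHyperplane_add_one {B : ι → R} (hB : B ≠ 0) :
    Module.finrank K (orthogonalHyperplane K B) + 1 = Fintype.card ι := by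
  classical
  obtain ⟨j, hj⟩ := Function.ne_iff.1 hB
  have hf : dotProductBilin K K (fun i => algebraMap R K (B i)) ≠ 0 := fun h => hj <| by
    simpa using LinearMap.congr_fun h (Pi.single j 1)
  exact (Module.Dual.finrank_ker_add_one_of_ne_zero hf).trans (Module.finrank_fintype_fun_eq_card K)

lemma orthogonalHyperplane_eq_iff {n : ℕ} (hn : Fintype.card ι = n + 1) {B : ι → R} (hB : B ≠ 0)
    {V : Submodule K (ι → K)} :
    orthogonalHyperplane K B = V ↔
      Module.finrank K V = n ∧ ∀ v ∈ V, ∑ i, algebraMap R K (B i) * v i = 0 := by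
  have hrank : Module.finrank K (orthogonalHyperplane K B) = n := by
    have := finrank_orthogonalHyperplane_add_one (K := K) hB
    lia
  refine ⟨?_, fun ⟨hV, hBV⟩ => ?_⟩
  · rintro rfl
    exact ⟨hrank, fun v hv => hv⟩
  · exact (Submodule.eq_of_le_of_finrank_eq hBV (hV.trans hrank.symm)).symm

lemma mul_eq_mul_of_orthogonalHyperplane_eq {B D : ι → R}
    (h : orthogonalHyperplane K B = orthogonalHyperplane K D) (i j : ι) :
    B i * D j = B j * D i := by
  classical
  have hmem : Pi.single j (algebraMap R K (B i)) - Pi.single i (algebraMap R K (B j)) ∈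
      orthogonalHyperplane K B := by
    simp [mem_orthogonalHyperplane, mul_sub, mul_comm, Pi.single_apply]
  rw [h] at hmem
  apply IsFractionRing.injective R K
  simpa [mem_orthogonalHyperplane, mul_sub, mul_comm, sub_eq_zero, Pi.single_apply] using hmem

lemma orthogonalHyperplane_eq_orthogonalHyperplane_iff [IsPrincipalIdealRing R] {B D : ι → R}
    (hB : IsPrimitiveVector B) (hD : IsPrimitiveVector D) :
    orthogonalHyperplane K B = orthogonalHyperplane K D ↔ ∃ u : Rˣ, u • D = B := by
  refine ⟨fun h => ?_, fun ⟨u, hu⟩ => hu ▸ orthogonalHyperplane_units_smul u D⟩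
  obtain ⟨w, hw⟩ := hD.exists_dotProduct_eq_one
  have hBD : (w ⬝ᵥ B) • D = B := by
    ext i
    calc (w ⬝ᵥ B) * D i = ∑ j, w j * (B j * D i) := by simp [dotProduct, Finset.sum_mul, mul_assoc]
      _ = ∑ j, w j * D j * B i := Finset.sum_congr rfl fun j _ => by
          rw [mul_eq_mul_of_orthogonalHyperplane_eq h j i]; ring
      _ = B i := by rw [← Finset.sum_mul, ← dotProduct, hw, one_mul]
  obtain ⟨u, hu⟩ := hB (w ⬝ᵥ B) fun i => ⟨D i, (congrFun hBD i).symm⟩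
  exact ⟨u, by rwa [Units.smul_def, hu]⟩

end Hyperplane

lemma ncard_image_orthogonalHyperplane_mul {ι F K : Type*} [Fintype ι] [Field F] [Field K]
    [Algebra F[X] K] [IsFractionRing F[X] K] (A : ι → F[X]) (m : ℕ) :
    (orthogonalHyperplane K '' primitiveSyzygiesOfHeight A m).ncard * (Nat.card F - 1) =
      (primitiveSyzygiesOfHeight A m).ncard := by
  rw [← Nat.card_units, ← card_units_polynomial]
  refine ncard_image_mul_card_of_free (fun u B hB => ?_) (fun u B hB huB => ?_)
    fun B hB D hD => orthogonalHyperplane_eq_orthogonalHyperplane_iff hB.1 hD.1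
  · refine ⟨hB.1.units_smul u, (smul_mem_syzygiesOfHeight_iff u.ne_zero).2 ?_⟩
    simpa using! hB.2
  · have h : (u : F[X]) • B = (1 : F[X]) • B := huB.trans (one_smul _ B).symm
    exact Units.ext (smul_left_injective _ hB.1.ne_zero h)

lemma ncard_image_orthogonalHyperplane {ι F K : Type*} [Fintype ι] [Field F] [Finite F] [Field K]
    [Algebra F[X] K] [IsFractionRing F[X] K] {A : ι → F[X]} (hA : IsPrimitiveVector A)
    {n l k : ℕ} (hn : Fintype.card ι = n + 2) (hl : vectorHeight A = l) :
    (orthogonalHyperplane K '' primitiveSyzygiesOfHeight A (l + k + 1)).ncard =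
      Nat.card F ^ ((n + 1) * k + n * l + 1) * (Nat.card F ^ (n + 1) - 1) *
        ∑ i ∈ Finset.range n, Nat.card F ^ i := by
  have hq : 1 < Nat.card F := Finite.one_lt_card
  have hP := ncard_primitiveSyzygiesOfHeight_mul hA hn hl (l.le_add_right k)
  have hgeom := geom_sum_mul (Nat.card F : ℤ) n
  rw [← ncard_image_orthogonalHyperplane_mul (K := K)] at hP
  have hcancel : ((Nat.card F : ℤ) - 1) * Nat.card F ^ l ≠ 0 :=
    mul_ne_zero (by lia) (pow_ne_zero _ (by lia))
  zify [hq.le, Nat.one_le_pow (n + 1) (Nat.card F) (by lia)] at hP ⊢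
  apply mul_right_cancel₀ hcancel
  linear_combination hP - Nat.card F ^ ((n + 1) * (l + k) + 1) * (Nat.card F ^ (n + 1) - 1) * hgeom

theorem card_two_dim_subspaces_containing_general {ι F : Type*} [Fintype ι] [Field F] [Fintype F]
    (K : Type*) [Field K] [Algebra F[X] K] [IsFractionRing F[X] K] (n l k : ℕ)
    (hn : Fintype.card ι = n + 2) (hk : 1 ≤ k) (A : ι → F[X])
    (hA : IsPrimitiveVector A) (hl : vectorHeight A = l) :
    Nat.card {V : Submodule K (ι → K) //
      Submodule.span K {fun i => algebraMap F[X] K (A i)} ≤ V ∧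
      Module.finrank K V = n + 1 ∧
      ∃ B : ι → F[X], IsPrimitiveVector B ∧ vectorHeight B = (l + k : ℕ) ∧
        ∀ v ∈ V, ∑ i, algebraMap F[X] K (B i) * v i = 0} =
      Fintype.card F ^ ((n + 1) * k + n * l - n) * (Fintype.card F ^ (n + 1) - 1) *
        ∑ i ∈ Finset.range n, Fintype.card F ^ i := by
  obtain ⟨k, rfl⟩ := Nat.exists_eq_add_of_le' hk
  have hexp : (n + 1) * (k + 1) + n * l - n = (n + 1) * k + n * l + 1 := by
    rw [Nat.sub_eq_iff_eq_add (by nlinarith)]; ring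
  rw [hexp, ← Nat.card_eq_fintype_card,
    ← ncard_image_orthogonalHyperplane (K := K) hA hn hl, ← Nat.card_coe_set_eq]
  refine Nat.card_congr (Equiv.subtypeEquivRight fun V => ⟨?_, ?_⟩)
  · rintro ⟨hAV, hV, B, hB, hBl, hBV⟩
    obtain rfl := (orthogonalHyperplane_eq_iff hn hB.ne_zero).2 ⟨hV, hBV⟩
    exact ⟨B, ⟨hB, hBl, span_le_orthogonalHyperplane_iff.1 hAV⟩, rfl⟩
  · rintro ⟨B, ⟨hB, hBl, hAB⟩, hBV⟩
    obtain ⟨hV, hBV'⟩ := (orthogonalHyperplane_eq_iff hn hB.ne_zero).1 hBV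
    exact ⟨hBV ▸ span_le_orthogonalHyperplane_iff.2 hAB, hV, B, hB, hBl, hBV'⟩

/-- Let `W ⊂ F³` (`F = 𝔽_q(X)`) be the one-dimensional subspace spanned by a coprime triple of
polynomials of maximal degree `l`, and let `k ≥ 1`.  The number of two-dimensional subspaces
`V ⊇ W` with `h(V) = h(W) + k` (the height of `V` being the height of its one-dimensional
orthogonal complement) equals `q^{2k+l-1}(q²-1)`. -/
theorem card_two_dim_subspaces_containing {F : Type*} [Field F] [Fintype F] (q l k : ℕ)
    (hq : Fintype.card F = q) (hk : 1 ≤ k)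
    (A : Fin 3 → Polynomial F)
    (hA : ∀ d : Polynomial F, (∀ i, d ∣ A i) → IsUnit d)
    (hdeg : (Finset.univ.sup fun i => (A i).degree) = (l : WithBot ℕ))
    (W : Submodule (RatFunc F) (Fin 3 → RatFunc F))
    (hW : W = Submodule.span (RatFunc F)
      {fun i => algebraMap (Polynomial F) (RatFunc F) (A i)}) :
    Nat.card {V : Submodule (RatFunc F) (Fin 3 → RatFunc F) //
      W ≤ V ∧ Module.finrank (RatFunc F) V = 2 ∧
      ∃ B : Fin 3 → Polynomial F,
        (∀ d : Polynomial F, (∀ i, d ∣ B i) → IsUnit d) ∧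
        (Finset.univ.sup fun i => (B i).degree) = ((l + k : ℕ) : WithBot ℕ) ∧
        ∀ v ∈ V, ∑ i, algebraMap (Polynomial F) (RatFunc F) (B i) * v i = 0} =
      q ^ (2 * k + l - 1) * (q ^ 2 - 1) := by
  subst hq hW
  simpa [IsPrimitiveVector, vectorHeight] using
    card_two_dim_subspaces_containing_general (RatFunc F) 1 l k (Fintype.card_fin 3) hk A hA hdeg
end

section
/- Let q be a prime power and fix integers m > 2l ≥ 0. Let N_2(m,l) be the number of ordered triples (A_1, A_2, A_3) of coprime polynomials in F_q[X] with A_1 monic of degree m, deg A_2 < m, deg A_3 < m, such that x_1A_1 + x_2A_2 + x_3A_3 = 0 has a solution of height l in F_q(X)^3. Then N_2(m,l) = (q^2-1)^2 q^{2(m+l)-3} if l > 0 and N_2(m,0) = (q^2-1)q^{2m-1}. -/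
open Polynomial

/-!
Count the pairs of coprime families `(A, P)` with `P ⬝ᵥ A = 0` in two ways. If `P` and `Q` are both
coprime relations of height `l` for `A`, then their cross product is a polynomial multiple of `A` of
degree at most `2 * l < m`, hence zero, so `Q` is a constant multiple of `P`: every `A` lies in `0`
or `q - 1` pairs. Conversely a relation for `A` is a nonzero `P` whose first entry does not have
maximal degree, and for such a coprime `P` the `A` with `P ⬝ᵥ A = 0`, not necessarily coprime, form
a translated fibre of the `F`-linear map `a ↦ P ⬝ᵥ a` on families of degree less than `m`; by
Bézout its image is all polynomials of degree less than `m + l`. Splitting off the monic greatest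
common divisor turns the counts `f n` of all families into the counts `f (n + 1) - q * f n` of
coprime ones, both for `A` and for `P`.
-/

section CoprimeFamily

variable {ι R : Type*} [CommRing R]

/-- A family is coprime if its common divisors are units. For a finite family in a principal ideal
ring this is equivalent to its entries generating the unit ideal; it does not ask the entries to be
pairwise coprime. -/
def IsCoprimeFamily (v : ι → R) : Prop :=
  ∀ d : R, (∀ i, d ∣ v i) → IsUnit d

theorem IsCoprimeFamily.unit_smul {v : ι → R} (hv : IsCoprimeFamily v) {u : R} (hu : IsUnit u) :
    IsCoprimeFamily (u • v) :=
  fun d hd => hv d fun i => (hu.dvd_mul_left).1 (hd i)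

section Fintype

variable [Fintype ι]

theorem dvd_dotProduct {d : R} {v : ι → R} (b : ι → R) (h : ∀ i, d ∣ v i) : d ∣ b ⬝ᵥ v :=
  Finset.dvd_sum fun i _ => (h i).mul_left (b i)

section IsBezout

variable [IsBezout R]

theorem exists_dvd_and_dotProduct_eq (v : ι → R) :
    ∃ g : R, (∀ i, g ∣ v i) ∧ ∃ b : ι → R, b ⬝ᵥ v = g := by
  have : (Ideal.span (Set.range v)).IsPrincipal :=
    IsBezout.isPrincipal_of_FG _ (Submodule.fg_span (Set.finite_range v))
  refine ⟨Submodule.IsPrincipal.generator (Ideal.span (Set.range v)), fun i => ?_, ?_⟩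
  · exact (Submodule.IsPrincipal.mem_iff_generator_dvd _).1 (Ideal.subset_span ⟨i, rfl⟩)
  · exact Ideal.mem_span_range_iff_exists_fun.1 (Submodule.IsPrincipal.generator_mem _)

theorem isCoprimeFamily_iff_exists_dotProduct_eq_one {v : ι → R} :
    IsCoprimeFamily v ↔ ∃ b : ι → R, b ⬝ᵥ v = 1 := by
  constructor
  · intro hv
    obtain ⟨g, hg, b, hb⟩ := exists_dvd_and_dotProduct_eq v
    obtain ⟨u, hu⟩ := (hv g hg).exists_left_inv
    exact ⟨u • b, by rw [smul_dotProduct, hb, smul_eq_mul, hu]⟩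
  · rintro ⟨b, hb⟩ d hd
    exact isUnit_of_dvd_one (hb ▸ dvd_dotProduct b hd)

end IsBezout

end Fintype

section Finite

variable [Finite ι] [IsBezout R]

theorem exists_eq_smul_isCoprimeFamily [IsDomain R] {v : ι → R} (hv : v ≠ 0) :
    ∃ (d : R) (w : ι → R), d ≠ 0 ∧ IsCoprimeFamily w ∧ v = d • w := by
  have := Fintype.ofFinite ι
  obtain ⟨g, hg, b, hb⟩ := exists_dvd_and_dotProduct_eq v
  choose w hw using hg
  obtain rfl : v = g • w := funext hw
  have hg₀ : g ≠ 0 := fun h => hv (by rw [h, zero_smul])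
  refine ⟨g, w, hg₀, isCoprimeFamily_iff_exists_dotProduct_eq_one.2 ⟨b, ?_⟩, rfl⟩
  rwa [dotProduct_smul, smul_eq_mul, mul_eq_left₀ hg₀] at hb

theorem IsCoprimeFamily.dvd_of_smul_eq_smul {d e : R} {v w : ι → R} (hv : IsCoprimeFamily v)
    (h : d • v = e • w) : e ∣ d := by
  have := Fintype.ofFinite ι
  obtain ⟨b, hb⟩ := isCoprimeFamily_iff_exists_dotProduct_eq_one.1 hv
  refine ⟨b ⬝ᵥ w, ?_⟩
  calc d = b ⬝ᵥ (d • v) := by rw [dotProduct_smul, hb, smul_eq_mul, mul_one]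
    _ = e * (b ⬝ᵥ w) := by rw [h, dotProduct_smul, smul_eq_mul]

end Finite

end CoprimeFamily

section CrossProduct

open scoped Matrix

variable {R : Type*} [CommRing R] [IsBezout R]

theorem IsCoprimeFamily.exists_eq_smul_of_cross_eq_zero {v w : Fin 3 → R}
    (hv : IsCoprimeFamily v) (h : v ⨯₃ w = 0) : ∃ t : R, w = t • v := by
  obtain ⟨b, hb⟩ := isCoprimeFamily_iff_exists_dotProduct_eq_one.1 hv
  have htriple := cross_cross_eq_smul_sub_smul' b v w
  rw [h, map_zero, dotProduct_comm v b, hb, one_smul] at htriple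
  exact ⟨b ⬝ᵥ w, (sub_eq_zero.1 htriple.symm).symm⟩

theorem IsCoprimeFamily.exists_cross_eq_smul {u v w : Fin 3 → R} (hu : IsCoprimeFamily u)
    (hv : v ⬝ᵥ u = 0) (hw : w ⬝ᵥ u = 0) : ∃ t : R, v ⨯₃ w = t • u := by
  refine hu.exists_eq_smul_of_cross_eq_zero ?_
  rw [cross_cross_eq_smul_sub_smul', dotProduct_comm u w, hv, hw, zero_smul, zero_smul, sub_zero]

end CrossProduct

section MaxDegree

variable {ι R : Type*} [Fintype ι]

section Semiring

variable [Semiring R]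

/-- The largest degree of the entries of a finite family of polynomials (`⊥` for the zero family).
For a coprime family over a field it is the height of the point with these coordinates. -/
noncomputable def maxDegree (A : ι → R[X]) : WithBot ℕ :=
  Finset.univ.sup fun i => (A i).degree

theorem degree_le_maxDegree (A : ι → R[X]) (i : ι) : (A i).degree ≤ maxDegree A :=
  Finset.le_sup (f := fun i => (A i).degree) (Finset.mem_univ i)

theorem maxDegree_lt_natCast_iff {A : ι → R[X]} {n : ℕ} :
    maxDegree A < n ↔ ∀ i, (A i).degree < n := by
  simp [maxDegree]

theorem maxDegree_le_natCast_iff {A : ι → R[X]} {n : ℕ} :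
    maxDegree A ≤ n ↔ ∀ i, (A i).degree ≤ n := by
  simp [maxDegree]

theorem exists_degree_eq_of_maxDegree_eq {A : ι → R[X]} {n : ℕ} (h : maxDegree A = n) :
    ∃ i, (A i).degree = n := by
  by_contra! hne
  exact (maxDegree_lt_natCast_iff.2 fun i =>
    (h ▸ degree_le_maxDegree A i).lt_of_ne (hne i)).ne h

theorem maxDegree_eq_bot_iff {A : ι → R[X]} : maxDegree A = ⊥ ↔ A = 0 := by
  simp [maxDegree, funext_iff]

theorem ne_zero_of_maxDegree_eq {A : ι → R[X]} {n : ℕ} (h : maxDegree A = n) : A ≠ 0 :=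
  maxDegree_eq_bot_iff.not.1 (h ▸ WithBot.natCast_ne_bot n)

theorem maxDegree_single_le [DecidableEq ι] (i : ι) (p : R[X]) :
    maxDegree (Pi.single i p) ≤ p.degree := by
  refine Finset.sup_le fun j _ => ?_
  obtain rfl | hj := eq_or_ne j i
  · rw [Pi.single_eq_same]
  · rw [Pi.single_eq_of_ne hj, degree_zero]
    exact bot_le

theorem maxDegree_add_le (A B : ι → R[X]) : maxDegree (A + B) ≤ max (maxDegree A) (maxDegree B) :=
  Finset.sup_le fun i _ => (degree_add_le _ _).trans <|
    max_le_max (degree_le_maxDegree A i) (degree_le_maxDegree B i)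

theorem maxDegree_smul [NoZeroDivisors R] (d : R[X]) (A : ι → R[X]) :
    maxDegree (d • A) = d.degree + maxDegree A := by
  have hmono : Monotone (d.degree + ·) := fun _ _ h => add_le_add_right h _
  simp only [maxDegree, Pi.smul_apply, smul_eq_mul, degree_mul]
  exact (Finset.apply_sup_eq_sup_comp_of_linearOrder (d.degree + ·) hmono (WithBot.add_bot _)).symm

theorem degree_dotProduct_le (P A : ι → R[X]) :
    (P ⬝ᵥ A).degree ≤ maxDegree P + maxDegree A := by
  refine (degree_sum_le _ _).trans (Finset.sup_le fun i _ => (degree_mul_le _ _).trans ?_)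
  gcongr <;> exact degree_le_maxDegree _ i

end Semiring

open scoped Matrix in
theorem maxDegree_cross_le [CommRing R] (P Q : Fin 3 → R[X]) :
    maxDegree (P ⨯₃ Q) ≤ maxDegree P + maxDegree Q := by
  have hminor (i j : Fin 3) : (P i * Q j - P j * Q i).degree ≤ maxDegree P + maxDegree Q := by
    refine (degree_sub_le _ _).trans (max_le ?_ ?_) <;>
      refine (degree_mul_le _ _).trans ?_ <;> gcongr <;> exact degree_le_maxDegree _ _
  refine Finset.sup_le fun i _ => ?_
  fin_cases i
  exacts [hminor 1 2, hminor 2 0, hminor 0 1]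

end MaxDegree

section CountingLemmas

theorem ncard_mul_eq_ncard_mul {α β : Type*} {s : Set α} {t : Set β} (r : α → β → Prop)
    {m n : ℕ} (hs : s.Finite) (ht : t.Finite) (hm : ∀ a ∈ s, {b ∈ t | r a b}.ncard = m)
    (hn : ∀ b ∈ t, {a ∈ s | r a b}.ncard = n) : s.ncard * m = t.ncard * n := by
  classical
  lift s to Finset α using hs
  lift t to Finset β using ht
  rw [Set.ncard_coe_finset, Set.ncard_coe_finset]
  refine Finset.card_mul_eq_card_mul r (fun a ha => ?_) fun b hb => ?_
  · simpa [Finset.bipartiteAbove, ← Finset.coe_filter] using hm a ha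
  · simpa [Finset.bipartiteBelow, ← Finset.coe_filter] using hn b hb

theorem ncard_fiber_mul_natCard_map {R M N : Type*} [Ring R] [AddCommGroup M] [AddCommGroup N]
    [Module R M] [Module R N] (f : M →ₗ[R] N) (V : Submodule R M) {w : N} (hw : w ∈ V.map f) :
    {v | v ∈ V ∧ f v = w}.ncard * Nat.card (V.map f) = Nat.card V := by
  let g : V →+ V.map f := (f.submoduleMap V).toAddMonoidHom
  have hg : Function.Surjective g := f.submoduleMap_surjective V
  have hfiber : {v | v ∈ V ∧ f v = w} ≃ g ⁻¹' {⟨w, hw⟩} :=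
    (Equiv.subtypeSubtypeEquivSubtypeInter (· ∈ V) (f · = w)).symm.trans
      (Equiv.subtypeEquivRight fun v => by simp [g, Subtype.ext_iff])
  rw [Set.ncard_congr' (hfiber.trans (AddMonoidHom.fiberEquivKerOfSurjective hg _)),
    ← g.ker.card_mul_index, AddSubgroup.index_ker, AddMonoidHom.range_eq_top.2 hg,
    AddSubgroup.card_top]
  rfl

variable {ι R : Type*} [Semiring R]

theorem natCard_degreeLT (n : ℕ) : Nat.card (degreeLT R n) = Nat.card R ^ n := by
  rw [Nat.card_congr (degreeLTEquiv R n).toEquiv, Nat.card_fun, Nat.card_fin]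

theorem finite_degreeLT [Finite R] (n : ℕ) : Finite (degreeLT R n) :=
  .of_equiv _ (degreeLTEquiv R n).symm.toEquiv

theorem finite_monic_natDegree_eq [Nontrivial R] [Finite R] (n : ℕ) :
    Finite {d : R[X] // d.Monic ∧ d.natDegree = n} :=
  have := finite_degreeLT (R := R) n
  .of_equiv _ (monicEquivDegreeLT n).symm

theorem natCard_monic_natDegree_eq [Nontrivial R] (n : ℕ) :
    Nat.card {d : R[X] // d.Monic ∧ d.natDegree = n} = Nat.card R ^ n := by
  rw [Nat.card_congr (monicEquivDegreeLT n), natCard_degreeLT]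

theorem ncard_setOf_forall_degree_lt [Fintype ι] (n : ι → ℕ) :
    {A : ι → R[X] | ∀ i, (A i).degree < n i}.ncard = Nat.card R ^ ∑ i, n i := by
  have hpi : {A : ι → R[X] | ∀ i, (A i).degree < n i} =
      Set.univ.pi fun i => (degreeLT R (n i) : Set R[X]) := by
    ext A
    simp [mem_degreeLT]
  rw [hpi, ← Nat.card_coe_set_eq, Nat.card_congr (Equiv.Set.univPi _), Nat.card_pi]
  simp [natCard_degreeLT, Finset.prod_pow_eq_pow_sum]

theorem ncard_setOf_maxDegree_lt [Fintype ι] (n : ℕ) :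
    {A : ι → R[X] | maxDegree A < n}.ncard = Nat.card R ^ (Fintype.card ι * n) := by
  simp only [maxDegree_lt_natCast_iff, ncard_setOf_forall_degree_lt fun _ => n, Finset.sum_const,
    Finset.card_univ, smul_eq_mul]

theorem mem_pi_degreeLT_iff [Fintype ι] {A : ι → R[X]} {n : ℕ} :
    A ∈ Submodule.pi Set.univ (fun _ => degreeLT R n) ↔ maxDegree A < n := by
  simp only [Submodule.mem_pi, Set.mem_univ, true_imp_iff, mem_degreeLT, maxDegree_lt_natCast_iff]

theorem natCard_pi_degreeLT [Fintype ι] (n : ℕ) :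
    Nat.card (Submodule.pi Set.univ fun _ : ι => degreeLT R n) =
      Nat.card R ^ (Fintype.card ι * n) := by
  simp only [← ncard_setOf_maxDegree_lt, ← mem_pi_degreeLT_iff]
  rfl

theorem finite_setOf_maxDegree_lt [Fintype ι] [Finite R] (n : ℕ) :
    {A : ι → R[X] | maxDegree A < n}.Finite := by
  have := finite_degreeLT (R := R) n
  refine (Set.Finite.pi' fun _ : ι => (degreeLT R n : Set R[X]).toFinite).subset fun A hA i => ?_
  exact mem_degreeLT.2 (maxDegree_lt_natCast_iff.1 hA i)

theorem finite_setOf_maxDegree_eq [Fintype ι] [Finite R] (n : ℕ) :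
    {A : ι → R[X] | maxDegree A = n}.Finite :=
  (finite_setOf_maxDegree_lt (n + 1)).subset fun _ hA =>
    hA.trans_lt (by exact_mod_cast n.lt_succ_self)

end CountingLemmas

section MonicStable

/-- A set of families of polynomials is stable if multiplication by monic polynomials neither leaves
nor enters it, so that it can be counted by splitting off the monic common divisor. -/
def IsMonicStable {ι R : Type*} [Semiring R] (S : Set (ι → R[X])) : Prop :=
  ∀ d : R[X], d.Monic → ∀ A, d • A ∈ S ↔ A ∈ S

variable {ι F : Type*} [Field F]

theorem exists_eq_monic_smul_isCoprimeFamily [Finite ι] {A : ι → F[X]} (hA : A ≠ 0) :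
    ∃ (d : F[X]) (B : ι → F[X]), d.Monic ∧ IsCoprimeFamily B ∧ A = d • B := by
  obtain ⟨d, B, hd, hB, rfl⟩ := exists_eq_smul_isCoprimeFamily hA
  have hlc : d.leadingCoeff ≠ 0 := leadingCoeff_ne_zero.2 hd
  refine ⟨d * C d.leadingCoeff⁻¹, C d.leadingCoeff • B, monic_mul_leadingCoeff_inv hd,
    hB.unit_smul (isUnit_C.2 hlc.isUnit), ?_⟩
  rw [smul_smul, mul_assoc, ← C_mul, inv_mul_cancel₀ hlc, C_1, mul_one]

theorem IsCoprimeFamily.monic_smul_inj [Finite ι] {d e : F[X]} {A B : ι → F[X]} (hd : d.Monic)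
    (he : e.Monic) (hA : IsCoprimeFamily A) (hB : IsCoprimeFamily B) (h : d • A = e • B) :
    d = e ∧ A = B := by
  obtain rfl : d = e := eq_of_monic_of_associated hd he <|
    associated_of_dvd_dvd (hB.dvd_of_smul_eq_smul h.symm) (hA.dvd_of_smul_eq_smul h)
  exact ⟨rfl, smul_right_injective _ hd.ne_zero h⟩

variable [Fintype ι]

open Finset.HasAntidiagonal (antidiagonal mem_antidiagonal)

theorem IsMonicStable.ncard_maxDegree_eq_sum [Finite F] {S : Set (ι → F[X])}
    (hS : IsMonicStable S) (n : ℕ) :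
    {A ∈ S | maxDegree A = n}.ncard = ∑ k ∈ antidiagonal n,
      Nat.card F ^ k.1 * {A ∈ S | IsCoprimeFamily A ∧ maxDegree A = k.2}.ncard := by
  let Factor (k : ℕ × ℕ) : Type _ := {d : F[X] // d.Monic ∧ d.natDegree = k.1} ×
    {A ∈ S | IsCoprimeFamily A ∧ maxDegree A = k.2}
  have hfinite (k : ℕ × ℕ) : Finite (Factor k) := by
    have := finite_monic_natDegree_eq (R := F) k.1
    have : Finite {A ∈ S | IsCoprimeFamily A ∧ maxDegree A = k.2} :=
      (finite_setOf_maxDegree_eq k.2).subset fun A hA => hA.2.2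
    exact inferInstanceAs (Finite (_ × _))
  let product (x : Σ k : antidiagonal n, Factor k) : ι → F[X] := x.2.1.1 • x.2.2.1
  have hinj : Function.Injective product := by
    rintro ⟨⟨⟨i, j⟩, hij⟩, ⟨d, hd, hdi⟩, A, _, hA, hAj⟩ 
      ⟨⟨⟨i', j'⟩, hij'⟩, ⟨e, he, hei⟩, B, _, hB, hBj⟩ h
    obtain ⟨rfl, rfl⟩ := IsCoprimeFamily.monic_smul_inj hd he hA hB h
    obtain rfl : i = i' := hdi.symm.trans hei
    obtain rfl : j = j' := WithBot.coe_injective (hAj.symm.trans hBj)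
    rfl
  have hrange : Set.range product = {A ∈ S | maxDegree A = n} := by
    ext A
    constructor
    · rintro ⟨⟨⟨⟨i, j⟩, hij⟩, ⟨d, hd, hdi⟩, B, hBS, -, hBj⟩, rfl⟩
      refine ⟨(hS d hd B).2 hBS, ?_⟩
      rw [maxDegree_smul, degree_eq_natDegree hd.ne_zero, hBj, hdi]
      exact_mod_cast mem_antidiagonal.1 hij
    · rintro ⟨hAS, hAn⟩
      obtain ⟨d, B, hd, hB, rfl⟩ :=
        exists_eq_monic_smul_isCoprimeFamily (ne_zero_of_maxDegree_eq hAn)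
      rw [maxDegree_smul, degree_eq_natDegree hd.ne_zero] at hAn
      obtain ⟨j, hj⟩ : ∃ j : ℕ, j = maxDegree B :=
        WithBot.ne_bot_iff_exists.1 (WithBot.add_ne_bot.1 (hAn ▸ WithBot.natCast_ne_bot n)).2
      rw [← hj] at hAn
      exact ⟨⟨⟨(d.natDegree, j), mem_antidiagonal.2 (by exact_mod_cast hAn)⟩,
        ⟨d, hd, rfl⟩, B, (hS d hd B).1 hAS, hB, hj.symm⟩, rfl⟩
  rw [← hrange, ← Set.image_univ, Set.ncard_image_of_injective _ hinj, Set.ncard_univ,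
    Nat.card_sigma, ← Finset.sum_coe_sort (antidiagonal n)]
  refine Finset.sum_congr rfl fun k _ => ?_
  rw [Nat.card_prod, natCard_monic_natDegree_eq, Nat.card_coe_set_eq]

theorem IsMonicStable.ncard_maxDegree_zero [Finite F] {S : Set (ι → F[X])}
    (hS : IsMonicStable S) :
    {A ∈ S | IsCoprimeFamily A ∧ maxDegree A = (0 : ℕ)}.ncard =
      {A ∈ S | maxDegree A = (0 : ℕ)}.ncard := by
  rw [hS.ncard_maxDegree_eq_sum 0, Finset.Nat.antidiagonal_zero, Finset.sum_singleton, pow_zero,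
    one_mul]

theorem IsMonicStable.ncard_maxDegree_succ [Finite F] {S : Set (ι → F[X])}
    (hS : IsMonicStable S) (n : ℕ) :
    {A ∈ S | IsCoprimeFamily A ∧ maxDegree A = (n + 1 : ℕ)}.ncard =
      {A ∈ S | maxDegree A = (n + 1 : ℕ)}.ncard -
        Nat.card F * {A ∈ S | maxDegree A = n}.ncard := by
  simp only [hS.ncard_maxDegree_eq_sum, Finset.Nat.sum_antidiagonal_succ, Finset.mul_sum, pow_succ',
    mul_assoc, pow_zero, one_mul, Nat.add_sub_cancel]

end MonicStable

section MonicAt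

variable {ι R : Type*}

/-- The entry at `i₀` is monic and its degree strictly exceeds that of every other entry. -/
def IsMonicAt [Semiring R] (i₀ : ι) (A : ι → R[X]) : Prop :=
  (A i₀).Monic ∧ ∀ i ≠ i₀, (A i).degree < (A i₀).degree

theorem IsMonicAt.maxDegree_eq [Semiring R] [Fintype ι] {i₀ : ι} {A : ι → R[X]}
    (hA : IsMonicAt i₀ A) : maxDegree A = (A i₀).degree := by
  refine (Finset.sup_le fun i _ => ?_).antisymm (degree_le_maxDegree A i₀)
  obtain rfl | hi := eq_or_ne i i₀
  exacts [le_rfl, (hA.2 i hi).le]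

theorem isMonicAt_monic_smul_iff [Ring R] [IsDomain R] {i₀ : ι} {d : R[X]} (hd : d.Monic)
    {A : ι → R[X]} : IsMonicAt i₀ (d • A) ↔ IsMonicAt i₀ A := by
  have hd₀ : d.degree ≠ ⊥ := degree_ne_bot.2 hd.ne_zero
  simp only [IsMonicAt, Pi.smul_apply, smul_eq_mul, degree_mul, WithBot.add_lt_add_iff_left hd₀]
  exact and_congr_left' ⟨hd.of_mul_monic_left, hd.mul⟩

theorem isMonicAt_and_maxDegree_eq_iff [Semiring R] [Nontrivial R] [Fintype ι] {i₀ : ι}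
    {A : ι → R[X]} {n : ℕ} :
    IsMonicAt i₀ A ∧ maxDegree A = n ↔
      ((A i₀).Monic ∧ (A i₀).natDegree = n) ∧ ∀ i ≠ i₀, (A i).degree < n := by
  constructor
  · rintro ⟨hA, hn⟩
    rw [hA.maxDegree_eq] at hn
    exact ⟨⟨hA.1, natDegree_eq_of_degree_eq_some hn⟩, hn ▸ hA.2⟩
  · rintro ⟨⟨hmonic, rfl⟩, hlt⟩
    rw [← degree_eq_natDegree hmonic.ne_zero] at hlt ⊢
    have hA : IsMonicAt i₀ A := ⟨hmonic, hlt⟩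
    exact ⟨hA, hA.maxDegree_eq⟩

theorem isMonicAt_zero_and_maxDegree_eq_iff [Semiring R] [Nontrivial R] {A : Fin 3 → R[X]} {n : ℕ} :
    IsMonicAt 0 A ∧ maxDegree A = n ↔
      (A 0).Monic ∧ (A 0).natDegree = n ∧ (A 1).degree < n ∧ (A 2).degree < n := by
  rw [isMonicAt_and_maxDegree_eq_iff, and_assoc]
  simp [Fin.forall_fin_succ]

theorem monic_and_natDegree_eq_iff_degree_sub_lt [Ring R] [Nontrivial R] {p : R[X]} {n : ℕ} :
    p.Monic ∧ p.natDegree = n ↔ (p - X ^ n).degree < (n : WithBot ℕ) := by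
  constructor
  · rintro ⟨hp, rfl⟩
    have hdeg : p.degree = (X ^ p.natDegree : R[X]).degree := by
      rw [degree_X_pow, degree_eq_natDegree hp.ne_zero]
    rw [← degree_eq_natDegree hp.ne_zero]
    exact degree_sub_lt_left hdeg hp.ne_zero
      (hp.leadingCoeff.trans (monic_X_pow _).leadingCoeff.symm)
  · intro h
    have hp : p = X ^ n + (p - X ^ n) := (add_sub_cancel (X ^ n) p).symm
    have hdeg : p.degree = n := by
      rw [hp, degree_add_eq_left_of_degree_lt (by rwa [degree_X_pow]), degree_X_pow]
    exact ⟨hp ▸ monic_X_pow_add h, natDegree_eq_of_degree_eq_some hdeg⟩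

theorem isMonicAt_and_maxDegree_eq_iff_maxDegree_sub_lt [Ring R] [Nontrivial R] [Fintype ι]
    [DecidableEq ι] {i₀ : ι} {A : ι → R[X]} {n : ℕ} :
    IsMonicAt i₀ A ∧ maxDegree A = n ↔ maxDegree (A - Pi.single i₀ (X ^ n)) < n := by
  rw [isMonicAt_and_maxDegree_eq_iff, monic_and_natDegree_eq_iff_degree_sub_lt,
    maxDegree_lt_natCast_iff]
  refine ⟨fun h i => ?_, fun h => ⟨?_, fun i hi => ?_⟩⟩
  · obtain rfl | hi := eq_or_ne i i₀
    · simpa only [Pi.sub_apply, Pi.single_eq_same] using h.1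
    · simpa only [Pi.sub_apply, Pi.single_eq_of_ne hi, sub_zero] using h.2 i hi
  · simpa only [Pi.sub_apply, Pi.single_eq_same] using h i₀
  · simpa only [Pi.sub_apply, Pi.single_eq_of_ne hi, sub_zero] using h i

theorem IsMonicAt.degree_lt_maxDegree [Ring R] [Nontrivial R] [Fintype ι] {i₀ : ι}
    {A P : ι → R[X]} (hA : IsMonicAt i₀ A) (hP : P ≠ 0) (hPA : P ⬝ᵥ A = 0) :
    (P i₀).degree < maxDegree P := by
  classical
  have hn : maxDegree A = (A i₀).natDegree :=
    hA.maxDegree_eq.trans (degree_eq_natDegree hA.1.ne_zero)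
  generalize (A i₀).natDegree = n at hn
  set a := A - Pi.single i₀ (X ^ n) with ha
  have han : maxDegree a < n := isMonicAt_and_maxDegree_eq_iff_maxDegree_sub_lt.1 ⟨hA, hn⟩
  have hPa : P i₀ * X ^ n = -(P ⬝ᵥ a) := by
    rw [ha, dotProduct_sub, hPA, dotProduct_single, zero_sub, neg_neg]
  have hlt : (P i₀).degree + n < maxDegree P + n :=
    calc (P i₀).degree + n = (P ⬝ᵥ a).degree := by
          rw [← degree_mul_X_pow, hPa, degree_neg]
      _ ≤ maxDegree P + maxDegree a := degree_dotProduct_le P a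
      _ < maxDegree P + n := WithBot.add_lt_add_left (maxDegree_eq_bot_iff.not.2 hP) han
  exact lt_of_add_lt_add_right hlt

end MonicAt

section FiberCount

variable {ι F : Type*} [Fintype ι] [Field F] {P : ι → F[X]} {l n : ℕ}

theorem IsCoprimeFamily.exists_maxDegree_lt_dotProduct_eq (hP : IsCoprimeFamily P)
    (hl : maxDegree P = l) (hln : l ≤ n) {p : F[X]} (hp : p.degree < (n + l : ℕ)) :
    ∃ a : ι → F[X], maxDegree a < n ∧ P ⬝ᵥ a = p := by
  classical
  -- Reduce a Bézout representation of `p` modulo an entry `P j` of maximal degree, collecting the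
  -- quotients in the `j`-th coordinate.
  obtain ⟨b, hb⟩ := isCoprimeFamily_iff_exists_dotProduct_eq_one.1 hP
  obtain ⟨j, hj⟩ := exists_degree_eq_of_maxDegree_eq hl
  have hj₀ : P j ≠ 0 := by
    intro h
    simp [h] at hj
  let r : ι → F[X] := fun i => p * b i % P j
  let t : ι → F[X] := fun i => p * b i / P j
  have hdiv : p • b = r + P j • t := funext fun i => (EuclideanDomain.mod_add_div _ _).symm
  have hp_eq : p = P ⬝ᵥ r + P j * (P ⬝ᵥ t) := by
    rw [← smul_eq_mul (P j), ← dotProduct_smul, ← dotProduct_add, ← hdiv, dotProduct_smul,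
      dotProduct_comm, hb, smul_eq_mul, mul_one]
  have hrl : maxDegree r < l := maxDegree_lt_natCast_iff.2 fun i => hj ▸ degree_mod_lt _ hj₀
  have hPr : (P ⬝ᵥ r).degree < (n + l : ℕ) :=
    calc (P ⬝ᵥ r).degree ≤ maxDegree P + maxDegree r := degree_dotProduct_le P r
      _ < l + l := by rw [hl]; exact WithBot.add_lt_add_left WithBot.coe_ne_bot hrl
      _ ≤ (n + l : ℕ) := by exact_mod_cast Nat.add_le_add_right hln l
  have ht : (P ⬝ᵥ t).degree < n := by
    have h : (P j * (P ⬝ᵥ t)).degree < (n + l : ℕ) := by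
      rw [← sub_eq_of_eq_add' hp_eq]
      exact (degree_sub_le _ _).trans_lt (max_lt hp hPr)
    rw [degree_mul, hj, Nat.cast_add, add_comm] at h
    exact lt_of_add_lt_add_right h
  refine ⟨r + Pi.single j (P ⬝ᵥ t), (maxDegree_add_le _ _).trans_lt (max_lt ?_ ?_), ?_⟩
  · exact hrl.trans_le (by exact_mod_cast hln)
  · exact (maxDegree_single_le j _).trans_lt ht
  · rw [dotProduct_add, dotProduct_single, ← hp_eq]

theorem IsCoprimeFamily.map_dotProduct_pi_degreeLT (hP : IsCoprimeFamily P)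
    (hl : maxDegree P = l) (hln : l ≤ n) :
    (Submodule.pi Set.univ fun _ : ι => degreeLT F n).map (dotProductBilin F F P) =
      degreeLT F (n + l) := by
  ext p
  rw [Submodule.mem_map, mem_degreeLT]
  constructor
  · rintro ⟨a, ha, rfl⟩
    refine (degree_dotProduct_le P a).trans_lt ?_
    rw [hl, add_comm n, Nat.cast_add]
    exact WithBot.add_lt_add_left (WithBot.natCast_ne_bot l) (mem_pi_degreeLT_iff.1 ha)
  · intro hp
    obtain ⟨a, ha, rfl⟩ := hP.exists_maxDegree_lt_dotProduct_eq hl hln hp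
    exact ⟨a, mem_pi_degreeLT_iff.2 ha, rfl⟩

variable [Finite F]

theorem IsCoprimeFamily.ncard_maxDegree_lt_dotProduct_eq (hP : IsCoprimeFamily P)
    (hl : maxDegree P = l) (hln : l ≤ n) {p : F[X]} (hp : p.degree < (n + l : ℕ)) :
    {a : ι → F[X] | maxDegree a < n ∧ P ⬝ᵥ a = p}.ncard =
      Nat.card F ^ (Fintype.card ι * n - (n + l)) := by
  have hmap := hP.map_dotProduct_pi_degreeLT hl hln
  have hfiber := ncard_fiber_mul_natCard_map (dotProductBilin F F P) _ (w := p)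
    (hmap ▸ mem_degreeLT.2 hp)
  rw [hmap, natCard_degreeLT, natCard_pi_degreeLT] at hfiber
  simp only [mem_pi_degreeLT_iff] at hfiber
  have hle : n + l ≤ Fintype.card ι * n :=
    (Nat.pow_dvd_pow_iff_le_right Finite.one_lt_card).1 (Dvd.intro_left _ hfiber)
  rw [← Nat.pow_div hle Nat.card_pos, ← hfiber]
  exact (Nat.mul_div_cancel _ (pow_pos Nat.card_pos _)).symm

theorem IsCoprimeFamily.ncard_isMonicAt_dotProduct_eq_zero {i₀ : ι} (hP : IsCoprimeFamily P)
    (hl : maxDegree P = l) (hi₀ : (P i₀).degree < l) (hln : l ≤ n) :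
    {A | (IsMonicAt i₀ A ∧ P ⬝ᵥ A = 0) ∧ maxDegree A = n}.ncard =
      Nat.card F ^ (Fintype.card ι * n - (n + l)) := by
  classical
  have hdeg : (-(P i₀ * X ^ n)).degree < ((n + l : ℕ) : WithBot ℕ) := by
    rw [degree_neg, degree_mul_X_pow, Nat.cast_add, add_comm]
    exact WithBot.add_lt_add_left (WithBot.natCast_ne_bot n) hi₀
  have hset : {A | (IsMonicAt i₀ A ∧ P ⬝ᵥ A = 0) ∧ maxDegree A = n} =
      Equiv.subRight (Pi.single i₀ (X ^ n)) ⁻¹'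
        {a | maxDegree a < n ∧ P ⬝ᵥ a = -(P i₀ * X ^ n)} := by
    ext A
    rw [Set.mem_preimage, Set.mem_ofPred_eq, Set.mem_ofPred_eq, Equiv.subRight_apply,
      ← isMonicAt_and_maxDegree_eq_iff_maxDegree_sub_lt, dotProduct_sub, dotProduct_single,
      sub_eq_neg_self, and_right_comm]
  rw [hset, Set.ncard_preimage_of_injective_subset_range (Equiv.injective _)
    (by rw [Equiv.range_eq_univ]; exact Set.subset_univ _),
    hP.ncard_maxDegree_lt_dotProduct_eq hl hln hdeg]

end FiberCount

section Sieve

variable {ι R F : Type*} [Fintype ι]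

theorem isMonicStable_isMonicAt_dotProduct_eq_zero [CommRing R] [IsDomain R] (i₀ : ι)
    (P : ι → R[X]) : IsMonicStable {A | IsMonicAt i₀ A ∧ P ⬝ᵥ A = 0} := by
  intro d hd A
  simp only [Set.mem_ofPred_eq, isMonicAt_monic_smul_iff hd, dotProduct_smul, smul_eq_zero,
    hd.ne_zero, false_or]

theorem isMonicStable_degree_lt_maxDegree [Semiring R] [IsDomain R] (i₀ : ι) :
    IsMonicStable {P : ι → R[X] | (P i₀).degree < maxDegree P} := by
  intro d hd P
  simp only [Set.mem_ofPred_eq, maxDegree_smul, Pi.smul_apply, smul_eq_mul, degree_mul,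
    WithBot.add_lt_add_iff_left (degree_ne_bot.2 hd.ne_zero)]

variable [Field F] [Finite F]

theorem ncard_degree_lt_maxDegree (i₀ : ι) (n : ℕ) :
    {P : ι → F[X] | (P i₀).degree < maxDegree P ∧ maxDegree P = n}.ncard =
      (Nat.card F ^ (Fintype.card ι - 1) - 1) * Nat.card F ^ (Fintype.card ι * n) := by
  classical
  let N : ι → ℕ := Function.update (fun _ => n + 1) i₀ n
  have hN (P : ι → F[X]) : (∀ i, (P i).degree < (N i : WithBot ℕ)) ↔
      (P i₀).degree < (n : WithBot ℕ) ∧ maxDegree P ≤ n := by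
    rw [Function.forall_update_iff _ fun i (k : ℕ) => (P i).degree < (k : WithBot ℕ),
      maxDegree_le_natCast_iff]
    simp only [← mem_degreeLT, degreeLT_succ_eq_degreeLE, mem_degreeLE]
    refine and_congr_right fun h₀ => ⟨fun h i => ?_, fun h i _ => h i⟩
    obtain rfl | hi := eq_or_ne i i₀
    exacts [(mem_degreeLT.1 h₀).le, h i hi]
  have hset : {P : ι → F[X] | (P i₀).degree < maxDegree P ∧ maxDegree P = n} =
      {P | ∀ i, (P i).degree < (N i : WithBot ℕ)} \ {P | maxDegree P < n} := by
    ext P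
    rw [Set.mem_sdiff, Set.mem_ofPred_eq, Set.mem_ofPred_eq, Set.mem_ofPred_eq, hN,
      not_lt, and_assoc, ← le_antisymm_iff]
    exact and_congr_left fun h => by rw [h]
  have hsub : {P : ι → F[X] | maxDegree P < n} ⊆
      {P | ∀ i, (P i).degree < (N i : WithBot ℕ)} :=
    fun P hP => (hN P).2 ⟨(degree_le_maxDegree P i₀).trans_lt hP, hP.le⟩
  have hsum : ∑ i, N i = (Fintype.card ι - 1) + Fintype.card ι * n := by
    rw [Finset.sum_update_of_mem (Finset.mem_univ i₀), Finset.sum_const, smul_eq_mul,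
      Finset.card_sdiff_of_subset (Finset.subset_univ _), Finset.card_singleton, Finset.card_univ]
    obtain ⟨d, hd⟩ := Nat.exists_eq_succ_of_ne_zero (Fintype.card_pos_iff.2 ⟨i₀⟩).ne'
    rw [hd, Nat.succ_sub_one, Nat.succ_eq_add_one]
    ring
  rw [hset, Set.ncard_sdiff hsub (finite_setOf_maxDegree_lt n), ncard_setOf_forall_degree_lt,
    ncard_setOf_maxDegree_lt, hsum, pow_add, Nat.sub_one_mul]

theorem ncard_isCoprimeFamily_degree_lt_maxDegree_zero (i₀ : ι) :
    {P : ι → F[X] | (P i₀).degree < maxDegree P ∧ IsCoprimeFamily P ∧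
      maxDegree P = (0 : ℕ)}.ncard = Nat.card F ^ (Fintype.card ι - 1) - 1 := by
  have hsieve := (isMonicStable_degree_lt_maxDegree (R := F) i₀).ncard_maxDegree_zero
  simp only [Set.mem_ofPred_eq, ncard_degree_lt_maxDegree] at hsieve
  rw [hsieve, mul_zero, pow_zero, mul_one]

theorem ncard_isCoprimeFamily_degree_lt_maxDegree_succ (i₀ : ι) (n : ℕ) :
    {P : ι → F[X] | (P i₀).degree < maxDegree P ∧ IsCoprimeFamily P ∧
      maxDegree P = (n + 1 : ℕ)}.ncard =
      (Nat.card F ^ (Fintype.card ι - 1) - 1) ^ 2 * Nat.card F ^ (Fintype.card ι * n + 1) := by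
  have hsieve := (isMonicStable_degree_lt_maxDegree (R := F) i₀).ncard_maxDegree_succ n
  simp only [Set.mem_ofPred_eq, ncard_degree_lt_maxDegree] at hsieve
  obtain ⟨d, hd⟩ := Nat.exists_eq_succ_of_ne_zero (Fintype.card_pos_iff.2 ⟨i₀⟩).ne'
  obtain ⟨e, he⟩ := Nat.exists_eq_succ_of_ne_zero (pow_pos (Nat.card_pos (α := F)) d).ne'
  rw [hsieve, hd, Nat.succ_sub_one, he, Nat.succ_sub_one]
  refine Nat.sub_eq_of_eq_add ?_
  calc e * Nat.card F ^ ((d + 1) * (n + 1))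
      = e * (Nat.card F ^ d * Nat.card F ^ ((d + 1) * n) * Nat.card F) := by ring
    _ = e ^ 2 * Nat.card F ^ ((d + 1) * n + 1) +
          Nat.card F * (e * Nat.card F ^ ((d + 1) * n)) := by rw [he, Nat.succ_eq_add_one]; ring

end Sieve

section Relation

variable {F : Type*} [Field F]

/-- The equation `∑ i, x i * A i = 0` has a solution of height `l` over the field of fractions.
After scaling, the solution is a coprime family of polynomials, and its height is `maxDegree`. -/
def HasRelationOfHeight {ι : Type*} [Fintype ι] (A : ι → F[X]) (l : ℕ) : Prop :=
  ∃ P : ι → F[X], IsCoprimeFamily P ∧ maxDegree P = l ∧ P ⬝ᵥ A = 0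

theorem IsCoprimeFamily.exists_eq_C_smul {A P Q : Fin 3 → F[X]} (hA : IsCoprimeFamily A)
    (hP : IsCoprimeFamily P) (hQ : IsCoprimeFamily Q) (hPA : P ⬝ᵥ A = 0) (hQA : Q ⬝ᵥ A = 0)
    (hdeg : maxDegree P + maxDegree Q < maxDegree A) : ∃ c : Fˣ, Q = C (c : F) • P := by
  obtain ⟨t, ht⟩ := hA.exists_cross_eq_smul hPA hQA
  have ht₀ : t = 0 := by
    by_contra ht₀
    refine hdeg.not_ge ?_
    calc maxDegree A ≤ t.degree + maxDegree A :=
          le_add_of_nonneg_left (zero_le_degree_iff.2 ht₀)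
      _ = maxDegree (t • A) := (maxDegree_smul t A).symm
      _ ≤ maxDegree P + maxDegree Q := ht ▸ maxDegree_cross_le P Q
  obtain ⟨s, rfl⟩ := hP.exists_eq_smul_of_cross_eq_zero (by rw [ht, ht₀, zero_smul])
  obtain ⟨c, hc, rfl⟩ := isUnit_iff.1 (hQ s fun i => dvd_mul_right s (P i))
  exact ⟨hc.unit, rfl⟩

theorem IsCoprimeFamily.ncard_isCoprimeFamily_dotProduct_eq_zero {A : Fin 3 → F[X]}
    {l m : ℕ} (hA : IsCoprimeFamily A) (hm : maxDegree A = m) (hlm : 2 * l < m)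
    (hAl : HasRelationOfHeight A l) :
    {P | IsCoprimeFamily P ∧ maxDegree P = l ∧ P ⬝ᵥ A = 0}.ncard = Nat.card F - 1 := by
  obtain ⟨P, hP, hPl, hPA⟩ := hAl
  have hinj : Function.Injective fun c : Fˣ => C (c : F) • P := fun c d h =>
    Units.ext (C_injective (smul_left_injective _ (ne_zero_of_maxDegree_eq hPl) h))
  rw [← Nat.card_units F, ← Set.ncard_univ, ← Set.ncard_image_of_injective _ hinj, Set.image_univ]
  congr 1
  ext Q
  constructor
  · rintro ⟨hQ, hQl, hQA⟩
    have hdeg : maxDegree P + maxDegree Q < maxDegree A := by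
      rw [hPl, hQl, hm, ← Nat.cast_add, ← two_mul]
      exact_mod_cast hlm
    obtain ⟨c, rfl⟩ := hA.exists_eq_C_smul hP hQ hPA hQA hdeg
    exact ⟨c, rfl⟩
  · rintro ⟨c, rfl⟩
    refine ⟨hP.unit_smul (isUnit_C.2 c.isUnit), ?_, ?_⟩
    · rw [maxDegree_smul, degree_C c.ne_zero, zero_add, hPl]
    · rw [smul_dotProduct, hPA, smul_zero]

variable [Finite F] {i₀ : Fin 3} {l m : ℕ}

theorem IsCoprimeFamily.ncard_isCoprimeFamily_isMonicAt_dotProduct_eq_zero {P : Fin 3 → F[X]}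
    (hP : IsCoprimeFamily P) (hl : maxDegree P = l) (hi₀ : (P i₀).degree < l) (hlm : l < m) :
    {A | (IsMonicAt i₀ A ∧ P ⬝ᵥ A = 0) ∧ IsCoprimeFamily A ∧ maxDegree A = m}.ncard =
      Nat.card F ^ (2 * m - (l + 1)) * (Nat.card F - 1) := by
  obtain ⟨n, rfl⟩ := Nat.exists_eq_succ_of_ne_zero hlm.ne_bot
  have hln : l ≤ n := Nat.le_of_lt_succ hlm
  have hsieve := (isMonicStable_isMonicAt_dotProduct_eq_zero i₀ P).ncard_maxDegree_succ n
  simp only [Set.mem_ofPred_eq, hP.ncard_isMonicAt_dotProduct_eq_zero hl hi₀ hlm.le,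
    hP.ncard_isMonicAt_dotProduct_eq_zero hl hi₀ hln] at hsieve
  rw [hsieve, Fintype.card_fin, Nat.mul_sub_one, ← pow_succ, ← pow_succ']
  congr 2 <;> omega

theorem ncard_isMonicAt_hasRelationOfHeight (hlm : 2 * l < m) :
    {A : Fin 3 → F[X] | (IsMonicAt i₀ A ∧ maxDegree A = m) ∧ IsCoprimeFamily A ∧
      HasRelationOfHeight A l}.ncard =
      {P : Fin 3 → F[X] | (P i₀).degree < maxDegree P ∧ IsCoprimeFamily P ∧
        maxDegree P = l}.ncard * Nat.card F ^ (2 * m - (l + 1)) := by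
  set s := {A : Fin 3 → F[X] | (IsMonicAt i₀ A ∧ maxDegree A = m) ∧ IsCoprimeFamily A ∧
    HasRelationOfHeight A l}
  set t := {P : Fin 3 → F[X] | (P i₀).degree < maxDegree P ∧ IsCoprimeFamily P ∧ maxDegree P = l}
  have hs : s.Finite := (finite_setOf_maxDegree_eq m).subset fun A hA => hA.1.2
  have ht : t.Finite := (finite_setOf_maxDegree_eq l).subset fun P hP => hP.2.2
  have habove : ∀ A ∈ s, {P ∈ t | P ⬝ᵥ A = 0}.ncard = Nat.card F - 1 := by
    rintro A ⟨⟨hA, hm⟩, hcop, hAl⟩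
    rw [← hcop.ncard_isCoprimeFamily_dotProduct_eq_zero hm hlm hAl]
    congr 1
    ext P
    constructor
    · rintro ⟨⟨-, hP, hPl⟩, hPA⟩
      exact ⟨hP, hPl, hPA⟩
    · rintro ⟨hP, hPl, hPA⟩
      exact ⟨⟨hA.degree_lt_maxDegree (ne_zero_of_maxDegree_eq hPl) hPA, hP, hPl⟩, hPA⟩
  have hbelow : ∀ P ∈ t, {A ∈ s | P ⬝ᵥ A = 0}.ncard =
      Nat.card F ^ (2 * m - (l + 1)) * (Nat.card F - 1) := by
    rintro P ⟨hi₀, hP, hPl⟩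
    rw [← hP.ncard_isCoprimeFamily_isMonicAt_dotProduct_eq_zero hPl (hPl ▸ hi₀) (by omega)]
    congr 1
    ext A
    constructor
    · rintro ⟨⟨⟨hA, hm⟩, hcop, -⟩, hPA⟩
      exact ⟨⟨hA, hPA⟩, hcop, hm⟩
    · rintro ⟨⟨hA, hPA⟩, hcop, hm⟩
      exact ⟨⟨⟨hA, hm⟩, hcop, P, hP, hPl, hPA⟩, hPA⟩
  have hcount := ncard_mul_eq_ncard_mul _ hs ht habove hbelow
  rw [← mul_assoc] at hcount
  exact Nat.eq_of_mul_eq_mul_right (Nat.sub_pos_of_lt Finite.one_lt_card) hcount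

end Relation

/-- `N₂(m,l)` for `m > 2l ≥ 0`: the number of coprime triples `(A₁, A₂, A₃)` with `A₁` monic
of degree `m`, `deg A₂ < m`, `deg A₃ < m`, such that `x₁A₁ + x₂A₂ + x₃A₃ = 0` has a solution
of height `l`, equals `(q²-1)²q^{2(m+l)-3}` if `l > 0` and `(q²-1)q^{2m-1}` if `l = 0`. -/
theorem card_N2 {F : Type*} [Field F] [Fintype F] (q m l : ℕ)
    (hq : Fintype.card F = q) (hml : 2 * l < m) :
    Nat.card {A : Fin 3 → Polynomial F //
      (∀ d : Polynomial F, (∀ i, d ∣ A i) → IsUnit d) ∧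
      (A 0).Monic ∧ (A 0).natDegree = m ∧
      (A 1).degree < (m : WithBot ℕ) ∧ (A 2).degree < (m : WithBot ℕ) ∧
      ∃ P : Fin 3 → Polynomial F,
        (∀ d : Polynomial F, (∀ i, d ∣ P i) → IsUnit d) ∧
        (Finset.univ.sup fun i => (P i).degree) = (l : WithBot ℕ) ∧
        ∑ i, P i * A i = 0} =
      if l = 0 then (q ^ 2 - 1) * q ^ (2 * m - 1)
      else (q ^ 2 - 1) ^ 2 * q ^ (2 * (m + l) - 3) := by
  subst hq
  have hiff (A : Fin 3 → F[X]) :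
      IsCoprimeFamily A ∧ (A 0).Monic ∧ (A 0).natDegree = m ∧ (A 1).degree < (m : WithBot ℕ) ∧
          (A 2).degree < (m : WithBot ℕ) ∧ HasRelationOfHeight A l ↔
        (IsMonicAt 0 A ∧ maxDegree A = m) ∧ IsCoprimeFamily A ∧ HasRelationOfHeight A l := by
    rw [isMonicAt_zero_and_maxDegree_eq_iff]
    tauto
  refine (Nat.card_congr (Equiv.subtypeEquivRight hiff)).trans
    ((ncard_isMonicAt_hasRelationOfHeight hml).trans ?_)
  rw [← Nat.card_eq_fintype_card]
  cases l with
  | zero =>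
    rw [if_pos rfl, ncard_isCoprimeFamily_degree_lt_maxDegree_zero, Fintype.card_fin]
  | succ k =>
    rw [if_neg k.succ_ne_zero, ncard_isCoprimeFamily_degree_lt_maxDegree_succ, Fintype.card_fin,
      mul_assoc, ← pow_add]
    congr 2
    omega
end
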